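/- arXiv:1107.4021 — 6 statements merged into one kernel-verified Lean document; each statement's English description precedes it below -/
import Mathlib

section
/- Let M be an n×κ real matrix, α a nonzero real number (so that MᵀM + α²I is invertible), and R an invertible κ×κ real matrix satisfying RᵀR = MᵀM + α²I. Then for every y ∈ ℝⁿ and every ŝ ∈ ℝ^κ, ‖R⁻ᵀ Mᵀ y − R ŝ‖² = ‖y − M ŝ‖² + α²‖ŝ‖² − c, where c = yᵀ (Iₙ − M (MᵀM + α²I)⁻¹ Mᵀ) y and ‖·‖ denotes the Euclidean norm. -/
/-!
Writing `w = R⁻ᵀMᵀy`, all squared norms expand as dot products. The cross terms agree because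
`Rᵀw = Mᵀy`, the terms quadratic in `ŝ` agree because `RᵀR = MᵀM + α²I`, and what remains is
`‖w‖² = yᵀM(RᵀR)⁻¹Mᵀy`, which is `‖y‖² - c`.
-/

open Matrix

/-- Squared Euclidean norm of a real vector. -/
noncomputable def euclNormSq {k : ℕ} (x : Fin k → ℝ) : ℝ := ∑ i, (x i) ^ 2

/-- Equivalence of the MMSE-preprocessed decoding metric and the regularized
metric: `‖R⁻ᵀMᵀy − Rŝ‖² = ‖y − Mŝ‖² + α²‖ŝ‖² − c` with
`c = yᵀ(I − M(MᵀM+α²I)⁻¹Mᵀ)y`. -/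
theorem mmse_metric_equivalence (n κ : ℕ)
    (M : Matrix (Fin n) (Fin κ) ℝ) (α : ℝ) (hα : α ≠ 0)
    (R : Matrix (Fin κ) (Fin κ) ℝ) (hR : IsUnit R.det)
    (h : Rᵀ * R = Mᵀ * M + α ^ 2 • (1 : Matrix (Fin κ) (Fin κ) ℝ))
    (y : Fin n → ℝ) (sh : Fin κ → ℝ) :
    euclNormSq ((Rᵀ)⁻¹.mulVec (Mᵀ.mulVec y) - R.mulVec sh) =
      euclNormSq (y - M.mulVec sh) + α ^ 2 * euclNormSq sh -
        y ⬝ᵥ ((1 - M * (Mᵀ * M + α ^ 2 • (1 : Matrix (Fin κ) (Fin κ) ℝ))⁻¹ * Mᵀ).mulVec y) := by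
  have sq : ∀ {k : ℕ} (x : Fin k → ℝ), euclNormSq x = x ⬝ᵥ x := fun x => by
    simp [euclNormSq, dotProduct, pow_two]
  have adj : ∀ {p q : ℕ} (A : Matrix (Fin p) (Fin q) ℝ) (u : Fin p → ℝ) (v : Fin q → ℝ),
      u ⬝ᵥ A *ᵥ v = (Aᵀ *ᵥ u) ⬝ᵥ v := fun A u v => by
    rw [dotProduct_mulVec, mulVec_transpose]
  have hRt : IsUnit Rᵀ.det := by rwa [det_transpose]
  set z := Mᵀ *ᵥ y with hz
  set w := (Rᵀ)⁻¹ *ᵥ z with hw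
  have hRw : Rᵀ *ᵥ w = z := by
    rw [hw, mulVec_mulVec, mul_nonsing_inv _ hRt, one_mulVec]
  have cross : w ⬝ᵥ R *ᵥ sh = y ⬝ᵥ M *ᵥ sh := by
    rw [adj, adj, hRw]
  have quad : R *ᵥ sh ⬝ᵥ R *ᵥ sh = M *ᵥ sh ⬝ᵥ M *ᵥ sh + α ^ 2 * (sh ⬝ᵥ sh) := by
    rw [adj R, adj M, mulVec_mulVec, mulVec_mulVec, h, add_mulVec, add_dotProduct, smul_mulVec,
      one_mulVec, smul_dotProduct, smul_eq_mul]
  have const : y ⬝ᵥ (1 - M * (Rᵀ * R)⁻¹ * Mᵀ) *ᵥ y = y ⬝ᵥ y - w ⬝ᵥ w := by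
    rw [sub_mulVec, one_mulVec, dotProduct_sub, ← mulVec_mulVec, ← mulVec_mulVec, ← hz, adj M,
      ← hz, Matrix.mul_inv_rev, ← mulVec_mulVec, ← hw, adj, transpose_nonsing_inv, ← hw]
  rw [← h, const, sq, sq, sq]
  simp only [sub_dotProduct, dotProduct_sub]
  rw [quad, dotProduct_comm (R *ᵥ sh) w, cross, dotProduct_comm (M *ᵥ sh) y]
  ring
end

section
/- Let k be a positive integer, R a k×k real matrix, σ > 0 a real number such that ‖R x‖ ≥ σ‖x‖ for all x ∈ ℝᵏ, ξ > 0, and r ∈ ℝᵏ. Then the set { s ∈ ℤᵏ : ‖r − R s‖ ≤ ξ } is finite and its cardinality is at most (√k + 2ξ/σ)ᵏ, where ‖·‖ denotes the Euclidean norm and integer vectors are viewed as real vectors. -/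
/-!
The bound `‖Rx‖ ≥ σ‖x‖` makes `R` injective, hence (being square) surjective, so `r = R c` for
some real vector `c`, and `‖r - R s‖ = ‖R (c - s)‖ ≥ σ ‖c - s‖`. Every counted `s` therefore lies
within `ρ = ξ / σ` of `c` in each coordinate. An interval of length `2ρ` holds at most `2ρ + 1`
integers, so there are at most `(1 + 2ρ) ^ k ≤ (√k + 2ρ) ^ k` such points.
-/

open Matrix

/-- Euclidean norm of a real vector. -/
noncomputable def euclNorm {k : ℕ} (x : Fin k → ℝ) : ℝ := Real.sqrt (∑ i, (x i) ^ 2)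

lemma abs_le_euclNorm {k : ℕ} (x : Fin k → ℝ) (i : Fin k) : |x i| ≤ euclNorm x :=
  Real.abs_le_sqrt
    (Finset.single_le_sum (f := fun i => x i ^ 2) (fun _ _ => sq_nonneg _) (Finset.mem_univ i))

lemma surjective_mulVec_of_lower_bound {k : ℕ} (R : Matrix (Fin k) (Fin k) ℝ) (σ : ℝ)
    (hσ : 0 < σ) (hRσ : ∀ x : Fin k → ℝ, σ * euclNorm x ≤ euclNorm (R.mulVec x)) :
    Function.Surjective R.mulVec := by
  have hinj : Function.Injective R.mulVecLin := by
    rw [injective_iff_map_eq_zero]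
    intro x hx
    have hx' : R.mulVec x = 0 := hx
    have h := hRσ x
    have h0 : euclNorm (0 : Fin k → ℝ) = 0 := by simp [euclNorm]
    rw [hx', h0] at h
    funext i
    have hi := abs_le_euclNorm x i
    have hle : euclNorm x ≤ 0 := nonpos_of_mul_nonpos_right h hσ
    exact abs_nonpos_iff.mp (hi.trans hle)
  exact LinearMap.surjective_of_injective hinj

lemma card_int_Icc_le (c ρ : ℝ) (hρ : 0 ≤ ρ) :
    ((Finset.Icc ⌈c - ρ⌉ ⌊c + ρ⌋).card : ℝ) ≤ 1 + 2 * ρ := by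
  rw [Int.card_Icc]
  have h1 := Int.floor_le (c + ρ)
  have h2 := Int.le_ceil (c - ρ)
  have h : (((⌊c + ρ⌋ + 1 - ⌈c - ρ⌉).toNat : ℤ) : ℝ) ≤ 1 + 2 * ρ := by
    rw [Int.toNat_eq_max]
    push_cast
    exact max_le (by linarith) (by linarith)
  exact_mod_cast h

/-- Sphere decoder node-count upper bound: the set of integer points in the
ellipsoid `{s : ‖r − Rs‖ ≤ ξ}` is finite, with at most `(√k + 2ξ/σ)^k` elements,
where `σ` lower bounds the singular values of `R`. -/
theorem sphere_decoder_node_count_upper (k : ℕ) (hk : 0 < k)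
    (R : Matrix (Fin k) (Fin k) ℝ) (σ ξ : ℝ) (hσ : 0 < σ) (hξ : 0 < ξ)
    (hRσ : ∀ x : Fin k → ℝ, σ * euclNorm x ≤ euclNorm (R.mulVec x))
    (r : Fin k → ℝ) :
    {s : Fin k → ℤ | euclNorm (r - R.mulVec (fun i => (s i : ℝ))) ≤ ξ}.Finite ∧
      (({s : Fin k → ℤ | euclNorm (r - R.mulVec (fun i => (s i : ℝ))) ≤ ξ}.ncard : ℝ) ≤
        (Real.sqrt k + 2 * ξ / σ) ^ k) := by
  obtain ⟨c, rfl⟩ := surjective_mulVec_of_lower_bound R σ hσ hRσ r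
  have hρ : 0 ≤ ξ / σ := by positivity
  have hsub : {s : Fin k → ℤ | euclNorm (R.mulVec c - R.mulVec (fun i => (s i : ℝ))) ≤ ξ} ⊆
      (Fintype.piFinset fun i => Finset.Icc ⌈c i - ξ / σ⌉ ⌊c i + ξ / σ⌋ : Finset (Fin k → ℤ)) := by
    intro s hs
    rw [Set.mem_ofPred_eq, ← Matrix.mulVec_sub] at hs
    have hnorm : euclNorm (c - fun i => (s i : ℝ)) ≤ ξ / σ := by
      rw [le_div_iff₀ hσ, mul_comm]
      exact (hRσ _).trans hs
    rw [Finset.mem_coe, Fintype.mem_piFinset]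
    intro i
    have hi := abs_le.mp ((abs_le_euclNorm _ i).trans hnorm)
    simp only [Pi.sub_apply] at hi
    rw [Finset.mem_Icc, Int.ceil_le, Int.le_floor]
    constructor <;> linarith [hi.1, hi.2]
  refine ⟨(Finset.finite_toSet _).subset hsub, ?_⟩
  have hcard := Set.ncard_le_ncard hsub (Finset.finite_toSet _)
  rw [Set.ncard_coe_finset, Fintype.card_piFinset] at hcard
  have hsqrt : 1 ≤ Real.sqrt k := Real.one_le_sqrt.mpr (by exact_mod_cast hk)
  calc _ ≤ ((∏ i, (Finset.Icc ⌈c i - ξ / σ⌉ ⌊c i + ξ / σ⌋).card : ℕ) : ℝ) := by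
        exact_mod_cast hcard
    _ = ∏ i, ((Finset.Icc ⌈c i - ξ / σ⌉ ⌊c i + ξ / σ⌋).card : ℝ) := by push_cast; rfl
    _ ≤ ∏ _i : Fin k, (Real.sqrt k + 2 * ξ / σ) := by
        refine Finset.prod_le_prod (fun _ _ => Nat.cast_nonneg _) fun i _ => ?_
        have h := card_int_Icc_le (c i) (ξ / σ) hρ
        rw [mul_div_assoc]
        linarith
    _ = _ := by simp
end

section
/- Let k be a positive integer, R an invertible k×k real matrix, Σ > 0 a real number such that ‖R x‖ ≤ Σ‖x‖ for all x ∈ ℝᵏ, ξ > 0, and r ∈ ℝᵏ. Then the set { s ∈ ℤᵏ : ‖r − R s‖ ≤ ξ } contains at least (max(0, 2ξ/(√k Σ) − √k))ᵏ elements, where ‖·‖ denotes the Euclidean norm and integer vectors are viewed as real vectors. -/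
/-!
With `c = R⁻¹ r`, the ellipsoid contains the Euclidean ball of radius `ξ / Sig` around `c`, which
contains the cube with centre `c` and half-side `a = ξ / (√k Sig)`. An interval of length `2a`
contains at least `2a - 1` integers, so the cube contains at least `(max 0 (2a - 1)) ^ k` integer
points, and `1 ≤ √k`.
-/

open Matrix

/-- A cube of half-side `a` lies in the concentric Euclidean ball of radius `√k * a`. -/
lemma euclNorm_le_of_abs_le {k : ℕ} {x : Fin k → ℝ} {a : ℝ} (ha : 0 ≤ a)
    (hx : ∀ i, |x i| ≤ a) : euclNorm x ≤ Real.sqrt k * a := by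
  have h : ∑ i, (x i) ^ 2 ≤ k * a ^ 2 := by
    calc ∑ i, (x i) ^ 2 ≤ ∑ _i : Fin k, a ^ 2 :=
          Finset.sum_le_sum fun i _ => sq_le_sq' (abs_le.mp (hx i)).1 (abs_le.mp (hx i)).2
      _ = k * a ^ 2 := by simp
  calc euclNorm x ≤ Real.sqrt (k * a ^ 2) := Real.sqrt_le_sqrt h
    _ = Real.sqrt k * a := by rw [Real.sqrt_mul (Nat.cast_nonneg k), Real.sqrt_sq ha]

lemma two_mul_sub_one_le_card_Icc (c a : ℝ) :
    2 * a - 1 ≤ ((Finset.Icc ⌈c - a⌉ ⌊c + a⌋).card : ℝ) := by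
  rw [Int.card_Icc]
  have h1 : ((⌊c + a⌋ + 1 - ⌈c - a⌉ : ℤ) : ℝ) ≤ ((⌊c + a⌋ + 1 - ⌈c - a⌉).toNat : ℝ) := by
    exact_mod_cast Int.self_le_toNat _
  push_cast at h1
  have h2 := Int.lt_floor_add_one (c + a)
  have h3 := Int.ceil_lt_add_one (c - a)
  linarith

/-- Sphere decoder node-count lower bound: the ellipsoid `{s : ‖r − Rs‖ ≤ ξ}`
contains at least `(max 0 (2ξ/(√k Σ) − √k))^k` integer points, where `Σ` upper
bounds the singular values of `R`. -/
theorem sphere_decoder_node_count_lower (k : ℕ) (hk : 0 < k)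
    (R : Matrix (Fin k) (Fin k) ℝ) (hR : IsUnit R.det)
    (Sig ξ : ℝ) (hSig : 0 < Sig) (hξ : 0 < ξ)
    (hRSig : ∀ x : Fin k → ℝ, euclNorm (R.mulVec x) ≤ Sig * euclNorm x)
    (r : Fin k → ℝ) :
    ∃ F : Finset (Fin k → ℤ),
      (↑F : Set (Fin k → ℤ)) ⊆
          {s : Fin k → ℤ | euclNorm (r - R.mulVec (fun i => (s i : ℝ))) ≤ ξ} ∧
        (max 0 (2 * ξ / (Real.sqrt k * Sig) - Real.sqrt k)) ^ k ≤ (F.card : ℝ) := by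
  have hk1 : 1 ≤ Real.sqrt k := Real.one_le_sqrt.mpr (by exact_mod_cast hk)
  have hk0 : 0 < Real.sqrt k := by linarith
  set a : ℝ := ξ / (Real.sqrt k * Sig) with ha
  have ha0 : 0 ≤ a := by positivity
  set c : Fin k → ℝ := R⁻¹.mulVec r with hc
  refine ⟨Fintype.piFinset fun i => Finset.Icc ⌈c i - a⌉ ⌊c i + a⌋, ?_, ?_⟩
  · intro s hs
    simp only [Finset.mem_coe, Fintype.mem_piFinset, Finset.mem_Icc, Int.ceil_le,
      Int.le_floor] at hs
    have hr : r - R.mulVec (fun i => (s i : ℝ)) = R.mulVec (c - fun i => (s i : ℝ)) := by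
      rw [Matrix.mulVec_sub, hc, Matrix.mulVec_mulVec, Matrix.mul_nonsing_inv R hR,
        Matrix.one_mulVec]
    have hcube : euclNorm (c - fun i => (s i : ℝ)) ≤ Real.sqrt k * a := by
      refine euclNorm_le_of_abs_le ha0 fun i => ?_
      obtain ⟨h1, h2⟩ := hs i
      rw [Pi.sub_apply, abs_le]
      constructor <;> linarith
    rw [Set.mem_ofPred_eq, hr]
    calc _ ≤ Sig * euclNorm (c - fun i => (s i : ℝ)) := hRSig _
      _ ≤ Sig * (Real.sqrt k * a) := by gcongr
      _ = ξ := by rw [ha]; field_simp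
  · rw [Fintype.card_piFinset, Nat.cast_prod]
    have h2a : 2 * ξ / (Real.sqrt k * Sig) = 2 * a := by rw [ha, mul_div_assoc]
    rw [h2a]
    calc _ = ∏ _i : Fin k, max 0 (2 * a - Real.sqrt k) := by simp
      _ ≤ _ := Finset.prod_le_prod (fun _ _ => le_max_left _ _) fun i _ =>
        max_le (Nat.cast_nonneg _) (by linarith [two_mul_sub_one_le_card_Icc (c i) a])
end

section
/- Let k be a positive integer, R an invertible k×k real matrix, ξ > 0, and r ∈ ℝᵏ. Let σ₁, …, σ_k > 0 be the singular values of R, i.e., the square roots of the eigenvalues of the symmetric positive definite matrix RᵀR. Then the cardinality of the set { s ∈ ℤᵏ : ‖r − R s‖ ≤ ξ } is at most ∏_{i=1}^{k} (√k + 2ξ/σᵢ), where ‖·‖ denotes the Euclidean norm and integer vectors are viewed as real vectors. -/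
/-!
The proof is a volume argument. The unit cubes centred at the admissible integer points are
pairwise disjoint (`unitCube_disjoint`). In the orthonormal coordinates `y = Vᵀ x` the constraint
`‖r - R s‖ ≤ ξ` confines the `i`-th coordinate of `s` to an interval of half-width `ξ / σ i` around
that of `R⁻¹ r` (`abs_coord_le_of_norm_le`), while a point of the unit cube around `s` is within
Euclidean distance `√k / 2` of `s`, so each of its `V`-coordinates moves by at most `√k / 2`
(`abs_coord_le_of_cube`). Hence all cubes lie in a `V`-rotated box with side lengths
`√k + 2 ξ / σ i`, and since `|det V| = 1` the number of cubes is at most the product of these.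
-/

open Matrix

open MeasureTheory

/-- The half-open unit cube centred at the integer point `s`. -/
def unitCube {k : ℕ} (s : Fin k → ℤ) : Set (Fin k → ℝ) :=
  Set.pi Set.univ fun i => Set.Ico ((s i : ℝ) - 1 / 2) ((s i : ℝ) + 1 / 2)

lemma unitCube_measurable {k : ℕ} (s : Fin k → ℤ) : MeasurableSet (unitCube s) :=
  MeasurableSet.univ_pi fun _ => measurableSet_Ico

lemma unitCube_volume {k : ℕ} (s : Fin k → ℤ) : volume (unitCube s) = 1 := by
  rw [unitCube, Real.volume_pi_Ico]
  apply Finset.prod_eq_one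
  intro i _
  ring_nf
  simp

lemma unitCube_disjoint {k : ℕ} {s t : Fin k → ℤ} (h : s ≠ t) :
    Disjoint (unitCube s) (unitCube t) := by
  rw [Set.disjoint_left]
  intro x hs ht
  apply h
  funext i
  have h1 := hs i (Set.mem_univ i)
  have h2 := ht i (Set.mem_univ i)
  rw [Set.mem_Ico] at h1 h2
  have a : (s i : ℝ) < t i + 1 := by linarith
  have b : (t i : ℝ) < s i + 1 := by linarith
  have a' : s i < t i + 1 := by exact_mod_cast a
  have b' : t i < s i + 1 := by exact_mod_cast b
  omega

lemma sum_sq_transpose_mulVec {k : ℕ} {V : Matrix (Fin k) (Fin k) ℝ} (hV : Vᵀ * V = 1)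
    (u : Fin k → ℝ) : ∑ i, ((Vᵀ *ᵥ u) i) ^ 2 = ∑ i, (u i) ^ 2 := by
  have h : (Vᵀ *ᵥ u) ⬝ᵥ (Vᵀ *ᵥ u) = u ⬝ᵥ u := by
    rw [Matrix.dotProduct_mulVec, Matrix.vecMul_transpose, Matrix.mulVec_mulVec,
      mul_eq_one_comm.mp hV, Matrix.one_mulVec]
  simpa [dotProduct, sq] using h

/-- A vector with entries at most `1 / 2` in absolute value has Euclidean length at most `√k / 2`,
which bounds each of its coordinates in an orthonormal basis. -/
lemma abs_coord_le_of_cube {k : ℕ} {V : Matrix (Fin k) (Fin k) ℝ} (hV : Vᵀ * V = 1)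
    {u : Fin k → ℝ} (hu : ∀ i, |u i| ≤ 1 / 2) (i : Fin k) :
    |(Vᵀ *ᵥ u) i| ≤ Real.sqrt k / 2 := by
  apply abs_le_of_sq_le_sq _ (by positivity)
  have h1 : ((Vᵀ *ᵥ u) i) ^ 2 ≤ ∑ j, ((Vᵀ *ᵥ u) j) ^ 2 :=
    Finset.single_le_sum (f := fun j => ((Vᵀ *ᵥ u) j) ^ 2) (fun j _ => sq_nonneg _)
      (Finset.mem_univ i)
  have h2 : ∑ j, (u j) ^ 2 ≤ ∑ _j : Fin k, (1 / 4 : ℝ) := by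
    apply Finset.sum_le_sum
    intro j _
    have := sq_le_sq' (abs_le.mp (hu j)).1 (abs_le.mp (hu j)).2
    linarith
  rw [sum_sq_transpose_mulVec hV] at h1
  rw [div_pow, Real.sq_sqrt (Nat.cast_nonneg k)]
  simp at h2
  linarith

/-- In the right singular basis, `‖R d‖² = ∑ σᵢ² (Vᵀ d)ᵢ²`. -/
lemma sum_sq_mulVec_eq {k : ℕ} {R V : Matrix (Fin k) (Fin k) ℝ} {σ : Fin k → ℝ}
    (hV : Vᵀ * V = 1)
    (hsv : Vᵀ * (Rᵀ * R) * V = Matrix.diagonal (fun i => (σ i) ^ 2)) (d : Fin k → ℝ) :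
    ∑ i, ((R *ᵥ d) i) ^ 2 = ∑ i, (σ i * (Vᵀ *ᵥ d) i) ^ 2 := by
  have hV' : V * Vᵀ = 1 := mul_eq_one_comm.mp hV
  have hR : Rᵀ * R = V * Matrix.diagonal (fun i => (σ i) ^ 2) * Vᵀ := by
    rw [← hsv]
    calc Rᵀ * R = (V * Vᵀ) * (Rᵀ * R) * (V * Vᵀ) := by rw [hV']; simp
      _ = _ := by simp only [Matrix.mul_assoc]
  have h1 : (R *ᵥ d) ⬝ᵥ (R *ᵥ d) = d ⬝ᵥ ((Rᵀ * R) *ᵥ d) := by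
    rw [← Matrix.mulVec_mulVec, Matrix.dotProduct_mulVec d, Matrix.vecMul_transpose]
  have h2 : d ⬝ᵥ ((Rᵀ * R) *ᵥ d) =
      (Vᵀ *ᵥ d) ⬝ᵥ (Matrix.diagonal (fun i => (σ i) ^ 2) *ᵥ (Vᵀ *ᵥ d)) := by
    rw [hR, ← Matrix.mulVec_mulVec, ← Matrix.mulVec_mulVec, Matrix.dotProduct_mulVec d,
      Matrix.mulVec_transpose V d]
  have h3 := h1.trans h2
  simp only [dotProduct, Matrix.mulVec_diagonal] at h3
  calc _ = _ := Finset.sum_congr rfl fun i _ => sq _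
    _ = _ := h3
    _ = _ := Finset.sum_congr rfl fun i _ => by ring

lemma abs_coord_le_of_norm_le {k : ℕ} {R V : Matrix (Fin k) (Fin k) ℝ} {σ : Fin k → ℝ}
    (hσ : ∀ i, 0 < σ i) (hV : Vᵀ * V = 1)
    (hsv : Vᵀ * (Rᵀ * R) * V = Matrix.diagonal (fun i => (σ i) ^ 2))
    {ξ : ℝ} (hξ : 0 < ξ) {d : Fin k → ℝ} (hd : euclNorm (R *ᵥ d) ≤ ξ) (i : Fin k) :
    |(Vᵀ *ᵥ d) i| ≤ ξ / σ i := by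
  rw [euclNorm, Real.sqrt_le_left hξ.le, sum_sq_mulVec_eq hV hsv] at hd
  have h1 : (σ i * (Vᵀ *ᵥ d) i) ^ 2 ≤ ∑ j, (σ j * (Vᵀ *ᵥ d) j) ^ 2 :=
    Finset.single_le_sum (f := fun j => (σ j * (Vᵀ *ᵥ d) j) ^ 2) (fun j _ => sq_nonneg _)
      (Finset.mem_univ i)
  have h2 := abs_le_of_sq_le_sq (h1.trans hd) hξ.le
  rw [abs_mul, abs_of_pos (hσ i)] at h2
  rw [le_div_iff₀ (hσ i)]
  linarith

/-- The box with centre `c` and side lengths `w i` in the coordinates `Vᵀ x`. -/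
def rotatedBox {k : ℕ} (V : Matrix (Fin k) (Fin k) ℝ) (c w : Fin k → ℝ) : Set (Fin k → ℝ) :=
  Matrix.toLin' Vᵀ ⁻¹' Set.pi Set.univ fun i => Set.Icc (c i - w i / 2) (c i + w i / 2)

lemma rotatedBox_volume {k : ℕ} {V : Matrix (Fin k) (Fin k) ℝ} (hV : Vᵀ * V = 1)
    (c w : Fin k → ℝ) : volume (rotatedBox V c w) = ∏ i, ENNReal.ofReal (w i) := by
  have hdet : V.det * V.det = 1 := by
    simpa using congrArg Matrix.det hV
  have habs : |V.det| = 1 := by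
    rcases mul_self_eq_one_iff.mp hdet with h | h <;> simp [h]
  have hne : LinearMap.det (Matrix.toLin' Vᵀ) ≠ 0 := by
    rw [LinearMap.det_toLin', Matrix.det_transpose]
    intro h
    simp [h] at hdet
  rw [rotatedBox, Measure.addHaar_preimage_linearMap _ hne, LinearMap.det_toLin',
    Matrix.det_transpose, abs_inv, habs, Set.pi_univ_Icc, Real.volume_Icc_pi]
  simp

/-- The volume comparison, for finitely many admissible integer points. -/
lemma card_le_of_forall_norm_le {k : ℕ} {R V : Matrix (Fin k) (Fin k) ℝ} {σ : Fin k → ℝ}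
    (hR : IsUnit R.det) {ξ : ℝ} (hξ : 0 < ξ) (r : Fin k → ℝ) (hσ : ∀ i, 0 < σ i)
    (hV : Vᵀ * V = 1)
    (hsv : Vᵀ * (Rᵀ * R) * V = Matrix.diagonal (fun i => (σ i) ^ 2))
    (F : Finset (Fin k → ℤ))
    (hF : ∀ s ∈ F, euclNorm (r - R.mulVec (fun i => (s i : ℝ))) ≤ ξ) :
    (F.card : ℝ) ≤ ∏ i, (Real.sqrt k + 2 * ξ / σ i) := by
  have hw : ∀ i, 0 ≤ Real.sqrt k + 2 * ξ / σ i := fun i => by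
    have := hσ i
    positivity
  have hsub : (⋃ s ∈ F, unitCube s) ⊆
      rotatedBox V (Vᵀ *ᵥ (R⁻¹ *ᵥ r)) (fun i => Real.sqrt k + 2 * ξ / σ i) := by
    intro x hx
    simp only [Set.mem_iUnion] at hx
    obtain ⟨s, hs, hx⟩ := hx
    have hd : euclNorm (R *ᵥ (R⁻¹ *ᵥ r - fun i => (s i : ℝ))) ≤ ξ := by
      rw [Matrix.mulVec_sub, Matrix.mulVec_mulVec, Matrix.mul_nonsing_inv R hR,
        Matrix.one_mulVec]
      exact hF s hs
    have hu : ∀ i, |(x - fun i => (s i : ℝ)) i| ≤ 1 / 2 := by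
      intro i
      have h := hx i (Set.mem_univ i)
      rw [Set.mem_Ico] at h
      rw [Pi.sub_apply, abs_le]
      constructor <;> linarith
    intro i _
    have h1 := abs_le.mp (abs_coord_le_of_norm_le hσ hV hsv hξ hd i)
    have h2 := abs_le.mp (abs_coord_le_of_cube hV hu i)
    rw [Matrix.mulVec_sub, Pi.sub_apply] at h1 h2
    have h3 : (Real.sqrt k + 2 * ξ / σ i) / 2 = Real.sqrt k / 2 + ξ / σ i := by ring
    rw [Matrix.toLin'_apply, Set.mem_Icc, h3]
    constructor <;> linarith [h1.1, h1.2, h2.1, h2.2]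
  have hvol : volume (⋃ s ∈ F, unitCube s) = F.card := by
    rw [measure_biUnion_finset (fun s _ t _ h => unitCube_disjoint h)
      (fun s _ => unitCube_measurable s)]
    simp [unitCube_volume]
  have h := measure_mono (μ := volume) hsub
  rw [hvol, rotatedBox_volume hV, ← ENNReal.ofReal_prod_of_nonneg (fun i _ => hw i),
    ← ENNReal.ofReal_natCast] at h
  exact (ENNReal.ofReal_le_ofReal_iff (Finset.prod_nonneg fun i _ => hw i)).mp h

/-- Sphere decoder node-count bound in terms of all singular values: if
`σ₁, …, σ_k > 0` are the singular values of `R` (i.e. `Vᵀ(RᵀR)V = diag(σᵢ²)` for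
some orthogonal `V`), then the number of integer points in the search ellipsoid
of radius `ξ` is at most `∏ᵢ (√k + 2ξ/σᵢ)`. -/
theorem sphere_decoder_node_count_singular_values (k : ℕ) (hk : 0 < k)
    (R : Matrix (Fin k) (Fin k) ℝ) (hR : IsUnit R.det)
    (ξ : ℝ) (hξ : 0 < ξ) (r : Fin k → ℝ)
    (σ : Fin k → ℝ) (hσ : ∀ i, 0 < σ i)
    (V : Matrix (Fin k) (Fin k) ℝ) (hV : Vᵀ * V = 1)
    (hsv : Vᵀ * (Rᵀ * R) * V = Matrix.diagonal (fun i => (σ i) ^ 2)) :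
    {s : Fin k → ℤ | euclNorm (r - R.mulVec (fun i => (s i : ℝ))) ≤ ξ}.Finite ∧
      (({s : Fin k → ℤ | euclNorm (r - R.mulVec (fun i => (s i : ℝ))) ≤ ξ}.ncard : ℝ) ≤
        ∏ i, (Real.sqrt k + 2 * ξ / σ i)) := by
  have key := card_le_of_forall_norm_le hR hξ r hσ hV hsv
  have hfin : {s : Fin k → ℤ | euclNorm (r - R.mulVec (fun i => (s i : ℝ))) ≤ ξ}.Finite := by
    by_contra hinf
    -- an infinite set would contain finite subsets larger than the uniform bound
    obtain ⟨n, hn⟩ := exists_nat_gt (∏ i, (Real.sqrt k + 2 * ξ / σ i))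
    obtain ⟨F, hF, hcard⟩ := Set.Infinite.exists_subset_card_eq hinf n
    have h := key F (fun s hs => hF hs)
    rw [hcard] at h
    linarith
  refine ⟨hfin, ?_⟩
  rw [Set.ncard_eq_toFinset_card _ hfin]
  exact key _ fun s hs => (hfin.mem_toFinset.mp hs)
end

section
/- Let M be an n×κ real matrix, α a real number, Γ > 0 and β ≥ 0 real numbers, and R a κ×κ real matrix satisfying RᵀR = MᵀM + α²I. Suppose that ‖M c‖ ≥ β for every c ∈ ℤ^κ with 0 < ‖c‖ ≤ Γ. Then for every nonzero c ∈ ℤ^κ, ‖R c‖² ≥ min(β², α²Γ²). In particular, the squared length of the shortest nonzero vector of the lattice generated by R is at least min(β², α²Γ²). Here ‖·‖ denotes the Euclidean norm and integer vectors are viewed as real vectors. -/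
/-!
The Gram identity `RᵀR = MᵀM + α²I` gives `‖Rc‖² = ‖Mc‖² + α²‖c‖²`. For `0 < ‖c‖ ≤ Γ` the first
term is at least `β²` by hypothesis; for `‖c‖ > Γ` the second is at least `α²Γ²`.
-/

open Matrix

/-- The Euclidean norm of `A x` depends only on the Gram matrix `Aᵀ * A`. -/
lemma euclNormSq_mulVec {m k : ℕ} (A : Matrix (Fin m) (Fin k) ℝ) (x : Fin k → ℝ) :
    euclNormSq (A.mulVec x) = x ⬝ᵥ (Aᵀ * A).mulVec x := by
  rw [← mulVec_mulVec, dotProduct_mulVec, vecMul_transpose]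
  simp [euclNormSq, dotProduct, sq]

lemma euclNorm_sq {k : ℕ} (x : Fin k → ℝ) : euclNorm x ^ 2 = euclNormSq x :=
  Real.sq_sqrt (Finset.sum_nonneg fun _ _ => sq_nonneg _)

lemma euclNorm_intCast_pos {k : ℕ} {c : Fin k → ℤ} (hc : c ≠ 0) :
    0 < euclNorm (fun i => (c i : ℝ)) := by
  obtain ⟨i, hi⟩ := Function.ne_iff.mp hc
  have hi' : (c i : ℝ) ≠ 0 := by exact_mod_cast hi
  exact Real.sqrt_pos.mpr (Finset.sum_pos' (fun _ _ => sq_nonneg _)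
    ⟨i, Finset.mem_univ i, by positivity⟩)

/-- Shortest-vector lower bound for the MMSE-preprocessed lattice: if
`RᵀR = MᵀM + α²I` and `‖Mc‖ ≥ β` for every short nonzero integer vector `c`
(those with `‖c‖ ≤ Γ`), then `‖Rc‖² ≥ min(β², α²Γ²)` for every nonzero
integer vector `c`. -/
theorem mmse_lattice_shortest_vector_bound (n κ : ℕ)
    (M : Matrix (Fin n) (Fin κ) ℝ) (α Γ β : ℝ) (hΓ : 0 < Γ) (hβ : 0 ≤ β)
    (R : Matrix (Fin κ) (Fin κ) ℝ)
    (h : Rᵀ * R = Mᵀ * M + α ^ 2 • (1 : Matrix (Fin κ) (Fin κ) ℝ))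
    (hM : ∀ c : Fin κ → ℤ,
      0 < euclNorm (fun i => (c i : ℝ)) → euclNorm (fun i => (c i : ℝ)) ≤ Γ →
        β ≤ euclNorm (M.mulVec (fun i => (c i : ℝ)))) :
    ∀ c : Fin κ → ℤ, c ≠ 0 →
      min (β ^ 2) (α ^ 2 * Γ ^ 2) ≤ euclNormSq (R.mulVec (fun i => (c i : ℝ))) := by
  intro c hc
  have key : euclNormSq (R.mulVec (fun i => (c i : ℝ))) =
      euclNorm (M.mulVec (fun i => (c i : ℝ))) ^ 2
        + α ^ 2 * euclNorm (fun i => (c i : ℝ)) ^ 2 := by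
    rw [euclNormSq_mulVec, h, add_mulVec, dotProduct_add, ← euclNormSq_mulVec, euclNorm_sq,
      euclNorm_sq, smul_mulVec, one_mulVec, dotProduct_smul]
    simp [euclNormSq, dotProduct, sq]
  rw [key]
  rcases le_or_gt (euclNorm (fun i => (c i : ℝ))) Γ with hle | hgt
  · have hb := hM c (euclNorm_intCast_pos hc) hle
    calc min (β ^ 2) (α ^ 2 * Γ ^ 2) ≤ β ^ 2 := min_le_left _ _
      _ ≤ euclNorm (M.mulVec (fun i => (c i : ℝ))) ^ 2 := by gcongr
      _ ≤ _ := le_add_of_nonneg_right (by positivity)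
  · calc min (β ^ 2) (α ^ 2 * Γ ^ 2) ≤ α ^ 2 * Γ ^ 2 := min_le_right _ _
      _ ≤ α ^ 2 * euclNorm (fun i => (c i : ℝ)) ^ 2 := by gcongr
      _ ≤ _ := le_add_of_nonneg_left (by positivity)
end

section
/- Let n be a positive integer and let r be a real number with 0 ≤ r ≤ n. Consider the set S of real numbers of the form ∑_{j=1}^{n} max(0, r/n − max(0, 1 − μ_j)) where μ = (μ₁, …, μ_n) ∈ ℝⁿ ranges over all vectors satisfying μ₁ ≥ μ₂ ≥ … ≥ μ_n ≥ 0 and ∑_{j=1}^{n} max(0, 1 − μ_j) ≥ r. Then the greatest element of S exists and equals (1/n)·( r(n − ⌊r⌋ − 1) + max(0, n⌊r⌋ − r(n − 1)) ), where ⌊r⌋ is the greatest integer not exceeding r. -/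
/-!
Put `a j = (1 - μ j)⁺ ∈ [0, 1]`, `ρ = r / n` and `k = ⌊r⌋`. The claimed maximum is
`max ((n - k - 1) ρ) ((n - k) ρ - (r - k))`.

Upper bound (`sum_posPart_le`): let `m` be the number of indices with `a j < ρ`. Only these
contribute, so the objective is at most `m ρ`. As the other `n - m` entries are at most `1`, the
contributing ones sum to at least `r - (n - m)`, so the objective is also at most
`m ρ - (r - n + m)`. The first bound settles `m ≤ n - k - 1`; the second is nonincreasing in `m`
because `ρ ≤ 1`, and settles `m ≥ n - k`.

Attainment: take `k` entries equal to `1`, one equal to `r - k` and the others `0`. Up to reversing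
the order of the indices this is `a i = clampUnit (r - i)`, and both sums are computed by induction
on the number of terms.
-/

/-- The projection of a real number to the unit interval. -/
noncomputable def clampUnit (x : ℝ) : ℝ := max 0 (min 1 x)

lemma sum_clampUnit (r : ℝ) (hr : 0 ≤ r) (N : ℕ) :
    ∑ i ∈ Finset.range N, clampUnit (r - i) = min r N := by
  induction N with
  | zero => simp [hr]
  | succ N ih =>
    rw [Finset.sum_range_succ, ih]
    push_cast
    unfold clampUnit
    grind

/-- The terms with `i < k` vanish, the one with `i = k` is `(ρ - (r - k))⁺`, and the later ones
equal `ρ`. -/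
lemma sum_posPart_clampUnit (r ρ : ℝ) (k : ℕ) (hk : (k : ℝ) ≤ r) (hk' : r < k + 1)
    (hρ : 0 ≤ ρ) (hρ1 : ρ ≤ 1) (N : ℕ) :
    ∑ i ∈ Finset.range N, max 0 (ρ - clampUnit (r - i)) =
      if N ≤ k then 0 else (N - k - 1) * ρ + max 0 (ρ - (r - k)) := by
  induction N with
  | zero => simp
  | succ N ih =>
    rw [Finset.sum_range_succ, ih]
    unfold clampUnit
    rcases lt_trichotomy N k with h | h | h
    · have h1 : (N : ℝ) + 1 ≤ k := by exact_mod_cast h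
      rw [if_pos h.le, if_pos (by omega), min_eq_left (by linarith)]
      simp [hρ1]
    · subst h
      rw [if_pos le_rfl, if_neg (by omega), min_eq_right (by linarith),
        max_eq_right (by linarith : (0 : ℝ) ≤ r - N)]
      push_cast
      ring
    · have h1 : (k : ℝ) + 1 ≤ N := by exact_mod_cast h
      rw [if_neg (by omega), if_neg (by omega), min_eq_right (by linarith),
        max_eq_left (by linarith : r - N ≤ 0), sub_zero, max_eq_right hρ]
      push_cast
      ring

lemma sum_posPart_le {n : ℕ} (r ρ : ℝ) (k : ℕ) (hρ : 0 ≤ ρ) (hρ1 : ρ ≤ 1)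
    (a : Fin n → ℝ) (ha0 : ∀ j, 0 ≤ a j) (ha1 : ∀ j, a j ≤ 1) (hs : r ≤ ∑ j, a j) :
    ∑ j, max 0 (ρ - a j) ≤ max ((n - k - 1) * ρ) ((n - k) * ρ - (r - k)) := by
  set m := (Finset.univ.filter fun j => a j < ρ).card with hm
  have hmsum : ∑ j, (if a j < ρ then (1 : ℝ) else 0) = m := by simp [hm]
  have h1 : ∑ j, max 0 (ρ - a j) ≤ m * ρ := by
    rw [← hmsum, Finset.sum_mul]
    refine Finset.sum_le_sum fun j _ => ?_
    have := ha0 j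
    split_ifs with h
    · exact max_le (by linarith) (by linarith)
    · exact max_le (by linarith) (by linarith)
  -- Termwise: equality where `a j < ρ`, and `0 ≤ 1 - a j` elsewhere.
  have h2 : ∑ j, max 0 (ρ - a j) ≤ n - ∑ j, a j - m * (1 - ρ) := by
    have hn : (n : ℝ) = ∑ _j : Fin n, (1 : ℝ) := by simp
    rw [← hmsum, Finset.sum_mul, hn, ← Finset.sum_sub_distrib, ← Finset.sum_sub_distrib]
    refine Finset.sum_le_sum fun j _ => ?_
    have := ha1 j
    split_ifs with h
    · exact max_le (by linarith) (by linarith)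
    · exact max_le (by linarith) (by linarith)
  rcases Nat.lt_or_ge (m + k) n with h | h
  · have h' : (m : ℝ) + k + 1 ≤ n := by exact_mod_cast h
    refine le_max_of_le_left (h1.trans ?_)
    exact mul_le_mul_of_nonneg_right (by linarith) hρ
  · have h' : (n : ℝ) ≤ m + k := by exact_mod_cast h
    refine le_max_of_le_right (h2.trans ?_)
    nlinarith [mul_nonneg (sub_nonneg.2 h') (sub_nonneg.2 hρ1)]

/-- The constrained maximization giving the complexity exponent of DMT optimal
MMSE-preprocessed lattice sphere decoding: the maximum of
`∑ⱼ (r/n − (1 − μⱼ)⁺)⁺` over nonincreasing nonnegative `μ` in the no-outage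
region `∑ⱼ (1 − μⱼ)⁺ ≥ r` equals
`(1/n)(r(n − ⌊r⌋ − 1) + (n⌊r⌋ − r(n − 1))⁺)`. -/
theorem complexity_exponent_optimization (n : ℕ) (hn : 0 < n)
    (r : ℝ) (hr0 : 0 ≤ r) (hrn : r ≤ n) :
    IsGreatest
      {x : ℝ | ∃ μ : Fin n → ℝ,
        (∀ i j : Fin n, i ≤ j → μ j ≤ μ i) ∧ (∀ j, 0 ≤ μ j) ∧
        (r ≤ ∑ j, max 0 (1 - μ j)) ∧
        x = ∑ j, max 0 (r / n - max 0 (1 - μ j))}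
      ((1 / n) * (r * (n - (⌊r⌋ : ℝ) - 1) + max 0 (n * (⌊r⌋ : ℝ) - r * (n - 1)))) := by
  have hn' : (0 : ℝ) < n := by exact_mod_cast hn
  obtain ⟨k, hkf⟩ : ∃ k : ℕ, ⌊r⌋ = (k : ℤ) := Int.eq_ofNat_of_zero_le (Int.floor_nonneg.2 hr0)
  have hk : (k : ℝ) ≤ r := by
    have := Int.floor_le r
    rw [hkf] at this
    exact_mod_cast this
  have hk' : r < k + 1 := by
    have := Int.lt_floor_add_one r
    rw [hkf] at this
    exact_mod_cast this
  have hρ : 0 ≤ r / n := by positivity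
  have hρ1 : r / n ≤ 1 := (div_le_one hn').2 hrn
  have hval : (1 / n) * (r * (n - (⌊r⌋ : ℝ) - 1) + max 0 (n * (⌊r⌋ : ℝ) - r * (n - 1))) =
      (n - k - 1) * (r / n) + max 0 (r / n - (r - k)) := by
    rw [hkf, mul_add, mul_max_of_nonneg _ _ (by positivity : (0 : ℝ) ≤ 1 / n)]
    push_cast
    congr 1
    · ring
    · congr 1
      · simp
      · field_simp
        ring
  rw [hval]
  constructor
  · have hc0 : ∀ x, 0 ≤ clampUnit x := fun x => le_max_left _ _
    have hc1 : ∀ x, clampUnit x ≤ 1 := fun x => max_le zero_le_one (min_le_left _ _)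
    -- The reversal `Fin.revPerm` makes `μ` nonincreasing.
    refine ⟨fun j => 1 - clampUnit (r - (Fin.revPerm j : ℕ)), ?_, ?_, ?_, ?_⟩
    · intro i j hij
      have h : ((Fin.rev j : ℕ) : ℝ) ≤ (Fin.rev i : ℕ) := by
        exact_mod_cast Fin.rev_le_rev.2 hij
      refine sub_le_sub_left (max_le_max le_rfl (min_le_min le_rfl ?_)) _
      exact sub_le_sub_left h _
    · intro j
      exact sub_nonneg.2 (hc1 _)
    · simp only [sub_sub_cancel, max_eq_right (hc0 _)]
      rw [Equiv.sum_comp Fin.revPerm (fun j : Fin n => clampUnit (r - (j : ℕ))),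
        Fin.sum_univ_eq_sum_range (fun i => clampUnit (r - i)), sum_clampUnit r hr0,
        min_eq_left hrn]
    · simp only [sub_sub_cancel, max_eq_right (hc0 _)]
      rw [Equiv.sum_comp Fin.revPerm (fun j : Fin n => max 0 (r / n - clampUnit (r - (j : ℕ)))),
        Fin.sum_univ_eq_sum_range (fun i => max 0 (r / n - clampUnit (r - i))),
        sum_posPart_clampUnit r (r / n) k hk hk' hρ hρ1]
      split_ifs with h
      -- Here `n ≤ k ≤ r ≤ n`, so that `r = n = k` and the value is `-1 + 1`.
      · have h1 : (n : ℝ) ≤ k := by exact_mod_cast h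
        have h2 : r = n := by linarith
        have h3 : (k : ℝ) = n := by linarith
        rw [h3, h2, div_self hn'.ne']
        norm_num
      · rfl
  · rintro x ⟨μ, -, hμ, hs, rfl⟩
    refine (sum_posPart_le r (r / n) k hρ hρ1 (fun j => max 0 (1 - μ j))
      (fun j => le_max_left _ _) (fun j => max_le zero_le_one (by linarith [hμ j])) hs).trans ?_
    refine max_le ?_ ?_
    · linarith [le_max_left 0 (r / n - (r - k))]
    · linarith [le_max_right 0 (r / n - (r - k))]
end
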